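/- Let N ≥ 2 and a b c : ℕ be such that the subpermutations π_T[a,a+N−1], π_T[b,b+N−1] and π_T[c,c+N−1] pairwise have the same form. Then SamePerm N a b or SamePerm N a c or SamePerm N b c; i.e., for each factor u of the Thue–Morse word there are at most two distinct subpermutations of π_T with form u. -/

import Mathlib

/-!
The form of a subpermutation of length `n + 1` is a factor `u` of length `n` (a shift increases at
its first step iff it starts with `0`), and once `u` is known the subpermutation is determined by
the comparisons of its last position `A` with the positions `A - p`, `1 ≤ p ≤ n`
(`exists_sep_of_not_samePerm`). If three occurrences of `u` gave three different subpermutations,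
then, up to reordering, with end positions `A, B, C`, some `p` would separate `A` (below) from `B`
(above) and some `q` would separate `B` (below) from `C` (above); such a pair of separations is
refuted by infinite descent on `n` (`no_two_sep`).

The descent uses the substitution `0 ↦ 01, 1 ↦ 10` fixing the Thue-Morse word.
* Shifts at even positions compare like the shifts at the halves (`prec_double`), whereas a shift
  at an odd position starting with `0` (resp. `1`) is below (resp. above) every shift at an even
  position (`prec_odd_even`, `prec_even_odd`). So a separation of even positions has an even `p`
  and can be halved (`Separates.half`).
* If the end positions are all odd, the next letter is forced by the last letter of `u`, and
  appending it to `u` makes them even (`Separates.succ`).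
* The parity of an occurrence is forced by `u` when `n ≥ 4` (`Separates.parity`), as alternating
  words of length six do not occur. If parities differ with `n ≤ 3`, then `p = 1` and
  `p = 3` do not separate anything, which leaves no room for `p ≠ q`.
-/

/-- The Thue-Morse word: parity of the binary digit sum. -/
def TM (n : ℕ) : ℕ := (Nat.digits 2 n).sum % 2

/-- `Prec a b` : the shift of the Thue-Morse word at `a` is lexicographically
smaller than the shift at `b`. -/
def Prec (a b : ℕ) : Prop :=
  ∃ c : ℕ, (∀ i < c, TM (a + i) = TM (b + i)) ∧ TM (a + c) < TM (b + c)

/-- The subpermutations of `π_T` of length `N` starting at `a` and `b` coincide. -/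
def SamePerm (N a b : ℕ) : Prop :=
  ∀ i < N, ∀ j < N, (Prec (a + i) (a + j) ↔ Prec (b + i) (b + j))

open scoped Classical in
/-- `P a N i` : the 0-indexed rank of position `a+i` within the subpermutation
`π_T[a, a+N-1]`. -/
noncomputable def P (a N i : ℕ) : ℕ :=
  ((Finset.range N).filter (fun j => Prec (a + j) (a + i))).card

/-- The subpermutations `π_T[a,a+N-1]` and `π_T[b,b+N-1]` have the same form. -/
def SameForm (N a b : ℕ) : Prop :=
  ∀ i < N - 1, (Prec (a + i) (a + (i + 1))) ↔ (Prec (b + i) (b + (i + 1)))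

/-- The subpermutation `π_T[a,a+N-1]` is of type `k`. -/
def TypeK (k N a : ℕ) : Prop :=
  1 ≤ k ∧ 2 * k ≤ N ∧
  ∃ ε : ℤ, (ε = 1 ∨ ε = -1) ∧
    ∀ i < k, (P a N i : ℤ) = P a N (N - k + i) + ε

/-- Positions `a` and `b` form a complementary pair of type `k` of length `N`. -/
def CompPair (k N a b : ℕ) : Prop :=
  1 ≤ k ∧ 2 * k ≤ N ∧
  ∃ ε : ℤ, (ε = 1 ∨ ε = -1) ∧
    (∀ i < k,
      (P a N i : ℤ) = P a N (N - k + i) + ε ∧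
      (P b N i : ℤ) = P a N (N - k + i) ∧
      (P b N (N - k + i) : ℤ) = P a N i) ∧
    (∀ j, k ≤ j → j < N - k → P b N j = P a N j)

/-- The permutation complexity of the Thue-Morse word: the number of distinct
subpermutations of `π_T` of length `N`. -/
noncomputable def tau (N : ℕ) : ℕ :=
  Set.ncard (Set.range (fun a : ℕ => fun i j : Fin N => Prec (a + i) (a + j)))

/-! ### The letters of the Thue-Morse word -/

lemma TM_double (n : ℕ) : TM (2 * n) = TM n := by
  rcases Nat.eq_zero_or_pos n with rfl | h
  · rfl
  · unfold TM
    rw [Nat.digits_def' (by norm_num) (by omega : 0 < 2 * n)]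
    simp

lemma TM_double_add_one (n : ℕ) : TM (2 * n + 1) = 1 - TM n := by
  unfold TM
  rw [Nat.digits_def' (by norm_num) (by omega : 0 < 2 * n + 1)]
  have h1 : (2 * n + 1) % 2 = 1 := by omega
  have h2 : (2 * n + 1) / 2 = n := by omega
  rw [h1, h2, List.sum_cons]
  omega

lemma TM_le_one (n : ℕ) : TM n ≤ 1 := by
  unfold TM; omega

/-- The two letters of a block `μ(0) = 01` or `μ(1) = 10` differ. -/
lemma TM_block {i : ℕ} (h : i % 2 = 0) : TM (i + 1) = 1 - TM i := by
  obtain ⟨k, rfl⟩ : ∃ k, i = 2 * k := ⟨i / 2, by omega⟩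
  rw [TM_double, TM_double_add_one]

lemma TM_no_cube (k : ℕ) (h1 : TM k = TM (k + 1)) (h2 : TM (k + 1) = TM (k + 2)) : False := by
  rcases Nat.mod_two_eq_zero_or_one k with h | h
  · have := TM_block h
    have := TM_le_one k
    omega
  · have := TM_block (i := k + 1) (by omega)
    have := TM_le_one (k + 1)
    simp only [Nat.add_assoc] at *
    norm_num at *
    omega

/-! ### The lexicographic order of the shifts -/

lemma prec_of_lt {i j : ℕ} (h : TM i < TM j) : Prec i j :=
  ⟨0, by simp, by simpa using h⟩

lemma Prec.le {i j : ℕ} (h : Prec i j) : TM i ≤ TM j := by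
  obtain ⟨c, h1, h2⟩ := h
  rcases Nat.eq_zero_or_pos c with rfl | hc
  · simpa using h2.le
  · simpa using (h1 0 hc).le

lemma prec_succ_iff {i j : ℕ} (h : TM i = TM j) : Prec i j ↔ Prec (i + 1) (j + 1) := by
  constructor
  · rintro ⟨c, h1, h2⟩
    rcases c with _ | c
    · simp at h2; omega
    · refine ⟨c, fun t ht => ?_, ?_⟩
      · have := h1 (t + 1) (by omega)
        rwa [show i + (t + 1) = i + 1 + t by omega, show j + (t + 1) = j + 1 + t by omega] at this
      · rwa [show i + (c + 1) = i + 1 + c by omega, show j + (c + 1) = j + 1 + c by omega] at h2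
  · rintro ⟨c, h1, h2⟩
    refine ⟨c + 1, fun t ht => ?_, ?_⟩
    · rcases t with _ | t
      · simpa using h
      · have := h1 t (by omega)
        rwa [show i + (t + 1) = i + 1 + t by omega, show j + (t + 1) = j + 1 + t by omega]
    · rwa [show i + (c + 1) = i + 1 + c by omega, show j + (c + 1) = j + 1 + c by omega]

lemma Prec.asymm {i j : ℕ} (h : Prec i j) (h' : Prec j i) : False := by
  obtain ⟨c, h1, h2⟩ := h
  obtain ⟨d, h3, h4⟩ := h'
  rcases lt_trichotomy c d with h | rfl | h
  · have := h3 c h; omega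
  · omega
  · have := h1 d h; omega

lemma Prec.double {i j : ℕ} (h : Prec i j) : Prec (2 * i) (2 * j) := by
  obtain ⟨c, h1, h2⟩ := h
  refine ⟨2 * c, fun t ht => ?_, ?_⟩
  · have := h1 (t / 2) (by omega)
    rcases Nat.mod_two_eq_zero_or_one t with h | h
    · rw [show 2 * i + t = 2 * (i + t / 2) by omega, show 2 * j + t = 2 * (j + t / 2) by omega,
        TM_double, TM_double, this]
    · rw [show 2 * i + t = 2 * (i + t / 2) + 1 by omega,
        show 2 * j + t = 2 * (j + t / 2) + 1 by omega,
        TM_double_add_one, TM_double_add_one, this]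
  · rw [← Nat.mul_add, ← Nat.mul_add, TM_double, TM_double]
    exact h2

/-- A shift at an odd position starting with `0` precedes every shift at an even position: the
former starts with `001` or `01001`, and the latter with `0110`, `01011` or `1`. -/
lemma prec_odd_even {i j : ℕ} (hi : i % 2 = 0) (hj : j % 2 = 1) (h0 : TM j = 0) : Prec j i := by
  have i0 := TM_le_one i
  have ib := TM_block hi
  by_cases e0 : TM i = 1
  · exact prec_of_lt (by omega)
  rw [prec_succ_iff (by omega)]
  have j1 := TM_le_one (j + 1)
  by_cases e1 : TM (j + 1) = 0
  · exact prec_of_lt (by omega)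
  rw [prec_succ_iff (by omega)]
  have jb := TM_block (i := j + 1) (by omega)
  have i2 := TM_le_one (i + 1 + 1)
  by_cases e2 : TM (i + 1 + 1) = 1
  · exact prec_of_lt (by omega)
  rw [prec_succ_iff (by omega)]
  have ib2 := TM_block (i := i + 1 + 1) (by omega)
  have j3 := TM_le_one (j + 1 + 1 + 1)
  -- otherwise three consecutive blocks `10` would start at position `j - 1`
  have e3 : TM (j + 1 + 1 + 1) = 0 := by
    by_contra hne
    obtain ⟨k, rfl⟩ : ∃ k, j = 2 * k + 1 := ⟨j / 2, by omega⟩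
    have a0 := TM_double_add_one k
    have a1 := TM_double (k + 1)
    have a2 := TM_double (k + 2)
    have := TM_le_one k
    rw [show 2 * (k + 1) = 2 * k + 1 + 1 by omega] at a1
    rw [show 2 * (k + 2) = 2 * k + 1 + 1 + 1 + 1 by omega] at a2
    exact TM_no_cube k (by omega) (by omega)
  exact prec_of_lt (by omega)

/-- The mirror image of `prec_odd_even` under exchanging the letters. -/
lemma prec_even_odd {i j : ℕ} (hi : i % 2 = 0) (hj : j % 2 = 1) (h1 : TM j = 1) : Prec i j := by
  have i0 := TM_le_one i
  have ib := TM_block hi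
  by_cases e0 : TM i = 0
  · exact prec_of_lt (by omega)
  rw [prec_succ_iff (by omega)]
  have j1 := TM_le_one (j + 1)
  by_cases e1 : TM (j + 1) = 1
  · exact prec_of_lt (by omega)
  rw [prec_succ_iff (by omega)]
  have jb := TM_block (i := j + 1) (by omega)
  have i2 := TM_le_one (i + 1 + 1)
  by_cases e2 : TM (i + 1 + 1) = 0
  · exact prec_of_lt (by omega)
  rw [prec_succ_iff (by omega)]
  have ib2 := TM_block (i := i + 1 + 1) (by omega)
  have j3 := TM_le_one (j + 1 + 1 + 1)
  -- otherwise three consecutive blocks `01` would start at position `j - 1`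
  have e3 : TM (j + 1 + 1 + 1) = 1 := by
    by_contra hne
    obtain ⟨k, rfl⟩ : ∃ k, j = 2 * k + 1 := ⟨j / 2, by omega⟩
    have a0 := TM_double_add_one k
    have a1 := TM_double (k + 1)
    have a2 := TM_double (k + 2)
    have := TM_le_one k
    rw [show 2 * (k + 1) = 2 * k + 1 + 1 by omega] at a1
    rw [show 2 * (k + 2) = 2 * k + 1 + 1 + 1 + 1 by omega] at a2
    exact TM_no_cube k (by omega) (by omega)
  exact prec_of_lt (by omega)

/-- The order is total on positions; equivalently, the Thue-Morse word is not eventually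
periodic. -/
lemma prec_total (i j : ℕ) (hij : i ≠ j) : Prec i j ∨ Prec j i := by
  induction hs : i + j using Nat.strong_induction_on generalizing i j with
  | _ s ih =>
    have ti := TM_le_one i
    have tj := TM_le_one j
    rcases lt_trichotomy (TM i) (TM j) with h | h | h
    · exact .inl (prec_of_lt h)
    · rcases Nat.mod_two_eq_zero_or_one i with hi | hi <;>
        rcases Nat.mod_two_eq_zero_or_one j with hj | hj
      · have := ih (i / 2 + j / 2) (by omega) (i / 2) (j / 2) (by omega) rfl
        have ei : 2 * (i / 2) = i := by omega
        have ej : 2 * (j / 2) = j := by omega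
        exact this.imp (fun h => ei ▸ ej ▸ h.double) (fun h => ei ▸ ej ▸ h.double)
      · rcases Nat.le_one_iff_eq_zero_or_eq_one.mp tj with e | e
        · exact .inr (prec_odd_even hi hj e)
        · exact .inl (prec_even_odd hi hj e)
      · rcases Nat.le_one_iff_eq_zero_or_eq_one.mp ti with e | e
        · exact .inl (prec_odd_even hj hi e)
        · exact .inr (prec_even_odd hj hi e)
      · rw [prec_succ_iff h, prec_succ_iff h.symm]
        have := ih ((i + 1) / 2 + (j + 1) / 2) (by omega) ((i + 1) / 2) ((j + 1) / 2)
          (by omega) rfl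
        have ei : 2 * ((i + 1) / 2) = i + 1 := by omega
        have ej : 2 * ((j + 1) / 2) = j + 1 := by omega
        exact this.imp (fun h => ei ▸ ej ▸ h.double) (fun h => ei ▸ ej ▸ h.double)
    · exact .inr (prec_of_lt h)

lemma not_prec_iff {i j : ℕ} (hij : i ≠ j) : ¬ Prec i j ↔ Prec j i :=
  ⟨fun h => (prec_total i j hij).resolve_left h, fun h h' => h.asymm h'⟩

lemma prec_double {i j : ℕ} : Prec (2 * i) (2 * j) ↔ Prec i j := by
  refine ⟨fun h => ?_, Prec.double⟩
  rcases eq_or_ne i j with rfl | hne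
  · exact (h.asymm h).elim
  · by_contra h'
    exact h.asymm ((not_prec_iff hne).mp h').double

lemma prec_next_iff (i : ℕ) : Prec i (i + 1) ↔ TM i = 0 := by
  have t := TM_le_one i
  rcases Nat.mod_two_eq_zero_or_one i with h | h
  · have := TM_block h
    refine ⟨fun hp => ?_, fun h0 => prec_of_lt (by omega)⟩
    have := hp.le
    omega
  · refine ⟨fun hp => ?_, fun h0 => prec_odd_even (by omega) h h0⟩
    by_contra h0
    exact hp.asymm (prec_even_odd (by omega) h (by omega))

/-! ### Separations -/

/-- The words of length `n` ending just before positions `A` and `B` coincide, and the comparison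
of the end position with the position `p` steps earlier comes out differently: `A` is below
`A - p`, and `B` is above `B - p`. The bounds make all subtractions genuine. -/
structure Separates (n A B p : ℕ) : Prop where
  hA : n ≤ A
  hB : n ≤ B
  one_le : 1 ≤ p
  le : p ≤ n
  eq : ∀ t, 1 ≤ t → t ≤ n → TM (A - t) = TM (B - t)
  below : Prec A (A - p)
  above : Prec (B - p) B

/-- The next letter is forced when `A` and `B` are odd; it has to agree with the letter at
`A - p`, since otherwise both comparisons would be decided there. -/
lemma Separates.succ {n A B p : ℕ} (h : Separates n A B p) (hA : A % 2 = 1) (hB : B % 2 = 1) :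
    Separates (n + 1) (A + 1) (B + 1) p := by
  obtain ⟨nA, nB, h1, hp, he, hb, ha⟩ := h
  have bA := TM_block (i := A - 1) (by omega)
  have bB := TM_block (i := B - 1) (by omega)
  rw [show A - 1 + 1 = A by omega] at bA
  rw [show B - 1 + 1 = B by omega] at bB
  have e1 := he 1 le_rfl (by omega)
  have ep := he p h1 hp
  have l1 := hb.le
  have l2 := ha.le
  refine ⟨by omega, by omega, h1, by omega, fun t ht1 htn => ?_, ?_, ?_⟩
  · rcases Nat.eq_or_lt_of_le ht1 with rfl | ht
    · simp only [Nat.add_sub_cancel]; omega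
    · have := he (t - 1) (by omega) (by omega)
      rwa [show A - (t - 1) = A + 1 - t by omega, show B - (t - 1) = B + 1 - t by omega] at this
  · rw [show A + 1 - p = A - p + 1 by omega]
    exact (prec_succ_iff (by omega)).mp hb
  · rw [show B + 1 - p = B - p + 1 by omega]
    exact (prec_succ_iff (by omega)).mp ha

lemma Separates.half {n A B p : ℕ} (h : Separates n A B p) (hA : A % 2 = 0) (hB : B % 2 = 0) :
    Separates (n / 2) (A / 2) (B / 2) (p / 2) := by
  obtain ⟨nA, nB, h1, hp, he, hb, ha⟩ := h
  have ep := he p h1 hp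
  -- for odd `p` both comparisons are decided by the common letter at `A - p` and `B - p`
  have p2 : p % 2 = 0 := by
    by_contra hodd
    rcases Nat.le_one_iff_eq_zero_or_eq_one.mp (TM_le_one (A - p)) with e | e
    · exact hb.asymm (prec_odd_even hA (by omega) e)
    · exact ha.asymm (prec_even_odd hB (by omega) (by omega))
  refine ⟨by omega, by omega, by omega, by omega, fun t ht1 htn => ?_, ?_, ?_⟩
  · have := he (2 * t) (by omega) (by omega)
    rwa [show A - 2 * t = 2 * (A / 2 - t) by omega, show B - 2 * t = 2 * (B / 2 - t) by omega,
      TM_double, TM_double] at this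
  · rw [← prec_double]
    rwa [show 2 * (A / 2) = A by omega, show 2 * (A / 2 - p / 2) = A - p by omega]
  · rw [← prec_double]
    rwa [show 2 * (B / 2) = B by omega, show 2 * (B / 2 - p / 2) = B - p by omega]

/-- A word occurring with ends of both parities alternates, because every pair of
consecutive letters is a block in one of the two occurrences. -/
lemma Separates.alternating {n A B p : ℕ} (h : Separates n A B p) (hAB : A % 2 ≠ B % 2) (t : ℕ)
    (ht : 1 ≤ t) (htn : t + 1 ≤ n) :
    TM (A - t) ≠ TM (A - (t + 1)) ∧ TM (B - t) ≠ TM (B - (t + 1)) := by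
  obtain ⟨nA, nB, -, -, he, -, -⟩ := h
  have e1 := he t ht (by omega)
  have e2 := he (t + 1) (by omega) htn
  have tA := TM_le_one (A - (t + 1))
  have tB := TM_le_one (B - (t + 1))
  have sA : A - (t + 1) + 1 = A - t := by omega
  have sB : B - (t + 1) + 1 = B - t := by omega
  rcases Nat.mod_two_eq_zero_or_one (A - (t + 1)) with hm | hm
  · have := TM_block hm
    rw [sA] at this
    omega
  · have := TM_block (i := B - (t + 1)) (by omega)
    rw [sB] at this
    omega

/-- An alternating word of length four before an odd position `B` completes to three
equal blocks. -/
lemma no_alternating {B : ℕ} (hB : B % 2 = 1) (h4 : 4 ≤ B)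
    (h : ∀ t, 1 ≤ t → t ≤ 3 → TM (B - t) ≠ TM (B - (t + 1))) : False := by
  obtain ⟨k, rfl⟩ : ∃ k, B = 2 * k + 5 := ⟨(B - 5) / 2, by omega⟩
  have h1 := h 1 (by norm_num) (by norm_num)
  have h2 := h 2 (by norm_num) (by norm_num)
  have h3 := h 3 (by norm_num) (by norm_num)
  simp only [show 2 * k + 5 - 1 = 2 * (k + 2) by omega,
    show 2 * k + 5 - (1 + 1) = 2 * (k + 1) + 1 by omega,
    show 2 * k + 5 - (2 + 1) = 2 * (k + 1) by omega,
    show 2 * k + 5 - (3 + 1) = 2 * k + 1 by omega, TM_double, TM_double_add_one] at h1 h2 h3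
  have := TM_le_one k
  have := TM_le_one (k + 1)
  have := TM_le_one (k + 2)
  exact TM_no_cube k (by omega) (by omega)

lemma Separates.parity {n A B p : ℕ} (h : Separates n A B p) (hn : 4 ≤ n) : A % 2 = B % 2 := by
  by_contra hne
  have nA := h.hA
  have nB := h.hB
  have ha := fun t h1 (h3 : t ≤ 3) => h.alternating hne t h1 (by omega)
  rcases Nat.mod_two_eq_zero_or_one A with hA | hA
  · exact no_alternating (B := B) (by omega) (by omega) fun t h1 h3 => (ha t h1 h3).2
  · exact no_alternating hA (by omega) fun t h1 h3 => (ha t h1 h3).1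

lemma Separates.ne_one {n A B p : ℕ} (h : Separates n A B p) : p ≠ 1 := by
  rintro rfl
  obtain ⟨nA, nB, -, hp, he, hb, ha⟩ := h
  have e := he 1 le_rfl hp
  have h1 := prec_next_iff (A - 1)
  have h2 := prec_next_iff (B - 1)
  rw [show A - 1 + 1 = A by omega] at h1
  rw [show B - 1 + 1 = B by omega] at h2
  exact hb.asymm (h1.mpr (e.trans (h2.mp ha)))

/-- If `A` ends a word `010` then the shift at `A - 3` is below the one at `A`, and
for `101` it is above. -/
lemma prec_sub_three_iff {A : ℕ} (h3 : 3 ≤ A) (h : TM (A - 1) = TM (A - 3)) :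
    Prec (A - 3) A ↔ TM (A - 3) = 0 := by
  have t := TM_le_one (A - 3)
  rcases Nat.mod_two_eq_zero_or_one A with hA | hA
  · refine ⟨fun hp => ?_, prec_odd_even hA (by omega)⟩
    by_contra h0
    exact hp.asymm (prec_even_odd hA (by omega) (by omega))
  · have b := TM_block (i := A - 1) (by omega)
    rw [show A - 1 + 1 = A by omega] at b
    refine ⟨fun hp => ?_, fun h0 => prec_of_lt (by omega)⟩
    have := hp.le
    omega

lemma Separates.ne_three {n A B p : ℕ} (h : Separates n A B p) (hA : TM (A - 1) = TM (A - 3)) :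
    p ≠ 3 := by
  rintro rfl
  obtain ⟨nA, nB, -, hp, he, hb, ha⟩ := h
  have e1 := he 1 le_rfl (by omega)
  have e3 := he 3 (by omega) hp
  have h1 := prec_sub_three_iff (A := A) (by omega) hA
  have h2 := prec_sub_three_iff (A := B) (by omega) (by omega)
  exact hb.asymm (h1.mpr (e3.trans (h2.mp ha)))

/-! ### The descent and its conclusion -/

/-- No word of length `n` has three occurrences of which the first two are separated by one `p`
and the last two, in the same direction, by another. -/
lemma no_two_sep (n A B C p q : ℕ) (h : Separates n A B p) (h' : Separates n B C q) : False := by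
  induction n using Nat.strong_induction_on generalizing A B C p q with
  | _ n ih =>
    have hpq : p ≠ q := by
      rintro rfl
      exact h.above.asymm h'.below
    have p1 := h.ne_one
    have q1 := h'.ne_one
    have hp := h.one_le
    have hq := h'.one_le
    have hpn := h.le
    have hqn := h'.le
    by_cases hpar : A % 2 = B % 2 ∧ B % 2 = C % 2
    · obtain ⟨hAB, hBC⟩ := hpar
      rcases Nat.mod_two_eq_zero_or_one A with hA | hA
      · exact ih (n / 2) (by omega) _ _ _ _ _ (h.half hA (by omega))
          (h'.half (by omega) (by omega))
      · exact ih ((n + 1) / 2) (by omega) _ _ _ _ _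
          ((h.succ hA (by omega)).half (by omega) (by omega))
          ((h'.succ (by omega) (by omega)).half (by omega) (by omega))
    · have hn : n < 4 := by
        by_contra hn
        exact hpar ⟨h.parity (by omega), h'.parity (by omega)⟩
      -- `p` and `q` are distinct elements of `{2, 3}`, and the common word is alternating
      have n3 : n = 3 := by omega
      subst n3
      have e1 := h.eq 1 (by omega) (by omega)
      have e3 := h.eq 3 (by omega) (by omega)
      have t1 := TM_le_one (B - 1)
      have t2 := TM_le_one (B - 2)
      have t3 := TM_le_one (B - 3)
      have key : TM (B - 1) ≠ TM (B - 2) ∧ TM (B - 2) ≠ TM (B - 3) := by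
        by_cases hAB : A % 2 = B % 2
        · have hBC : B % 2 ≠ C % 2 := fun hBC => hpar ⟨hAB, hBC⟩
          exact ⟨(h'.alternating hBC 1 (by omega) (by omega)).1,
            (h'.alternating hBC 2 (by omega) (by omega)).1⟩
        · exact ⟨(h.alternating hAB 1 (by omega) (by omega)).2,
            (h.alternating hAB 2 (by omega) (by omega)).2⟩
      have p3 := h.ne_three (by omega)
      have q3 := h'.ne_three (by omega)
      omega

lemma SameForm.TM_eq {n a b : ℕ} (h : SameForm (n + 1) a b) (i : ℕ) (hi : i < n) :
    TM (a + i) = TM (b + i) := by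
  have := h i (by omega)
  rw [← Nat.add_assoc, ← Nat.add_assoc, prec_next_iff, prec_next_iff] at this
  have := TM_le_one (a + i)
  have := TM_le_one (b + i)
  omega

/-- Given the form, a subpermutation is determined by the comparisons with its last position: to
compare two other positions, advance both as long as the letters agree. -/
lemma samePerm_of_last {n a b : ℕ} (h : ∀ i < n, TM (a + i) = TM (b + i))
    (hl : ∀ p, 1 ≤ p → p ≤ n → (Prec (a + n) (a + n - p) ↔ Prec (b + n) (b + n - p))) :
    SamePerm (n + 1) a b := by
  have main : ∀ d i j, i < j → j + d = n → (Prec (a + i) (a + j) ↔ Prec (b + i) (b + j)) := by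
    intro d
    induction d with
    | zero =>
      intro i j hij hj
      have := hl (n - i) (by omega) (by omega)
      rw [show a + n - (n - i) = a + i by omega, show b + n - (n - i) = b + i by omega] at this
      rw [← not_prec_iff (by omega : a + j ≠ a + i), ← not_prec_iff (by omega : b + j ≠ b + i)]
      rw [Nat.add_zero] at hj
      rw [hj, this]
    | succ d ih =>
      intro i j hij hj
      have ei := h i (by omega)
      have ej := h j (by omega)
      by_cases e : TM (a + i) = TM (a + j)
      · rw [prec_succ_iff e, prec_succ_iff (by omega : TM (b + i) = TM (b + j))]
        exact ih (i + 1) (j + 1) (by omega) (by omega)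
      · constructor
        · intro hp
          have := hp.le
          exact prec_of_lt (by omega)
        · intro hp
          have := hp.le
          exact prec_of_lt (by omega)
  intro i hi j hj
  rcases lt_trichotomy i j with hij | rfl | hij
  · exact main (n - j) i j hij (by omega)
  · exact ⟨fun h => (h.asymm h).elim, fun h => (h.asymm h).elim⟩
  · rw [← not_prec_iff (by omega : a + j ≠ a + i), ← not_prec_iff (by omega : b + j ≠ b + i),
      main (n - i) j i hij (by omega)]

lemma Separates.of_form {n a b p : ℕ} (h : ∀ i < n, TM (a + i) = TM (b + i))
    (h1 : 1 ≤ p) (hp : p ≤ n)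
    (ha : Prec (a + n) (a + n - p)) (hb : ¬ Prec (b + n) (b + n - p)) :
    Separates n (a + n) (b + n) p := by
  refine ⟨by omega, by omega, h1, hp, fun t ht htn => ?_, ha, (not_prec_iff (by omega)).mp hb⟩
  have := h (n - t) (by omega)
  rwa [show a + n - t = a + (n - t) by omega, show b + n - t = b + (n - t) by omega]

lemma exists_sep_of_not_samePerm {n a b : ℕ} (h : ∀ i < n, TM (a + i) = TM (b + i))
    (hne : ¬ SamePerm (n + 1) a b) :
    ∃ p, 1 ≤ p ∧ p ≤ n ∧ ¬ (Prec (a + n) (a + n - p) ↔ Prec (b + n) (b + n - p)) := by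
  by_contra hcon
  push Not at hcon
  exact hne (samePerm_of_last h hcon)

/-- Three pairwise different subpermutations of the same form, of which `p` puts the first below
and the second above, yield two consecutive separations: the side of `p` on which the third one
lies already contains another one, from which some `q` or `r` separates it. -/
lemma no_three {n a b c p : ℕ} (hab : ∀ i < n, TM (a + i) = TM (b + i))
    (hac : ∀ i < n, TM (a + i) = TM (c + i)) (h1 : 1 ≤ p) (hp : p ≤ n)
    (ha : Prec (a + n) (a + n - p)) (hb : ¬ Prec (b + n) (b + n - p))
    (nac : ¬ SamePerm (n + 1) a c) (nbc : ¬ SamePerm (n + 1) b c) : False := by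
  have hbc : ∀ i < n, TM (b + i) = TM (c + i) := fun i hi => (hab i hi).symm.trans (hac i hi)
  have hca : ∀ i < n, TM (c + i) = TM (a + i) := fun i hi => (hac i hi).symm
  have hcb : ∀ i < n, TM (c + i) = TM (b + i) := fun i hi => (hbc i hi).symm
  by_cases hc : Prec (c + n) (c + n - p)
  · obtain ⟨q, q1, hq, hne⟩ := exists_sep_of_not_samePerm hac nac
    by_cases hqa : Prec (a + n) (a + n - q)
    · exact no_two_sep _ _ _ _ _ _ (Separates.of_form hac q1 hq hqa (by tauto))
        (Separates.of_form hcb h1 hp hc hb)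
    · exact no_two_sep _ _ _ _ _ _ (Separates.of_form hca q1 hq (by tauto) hqa)
        (Separates.of_form hab h1 hp ha hb)
  · obtain ⟨r, r1, hr, hne⟩ := exists_sep_of_not_samePerm hbc nbc
    by_cases hrb : Prec (b + n) (b + n - r)
    · exact no_two_sep _ _ _ _ _ _ (Separates.of_form hab h1 hp ha hb)
        (Separates.of_form hbc r1 hr hrb (by tauto))
    · exact no_two_sep _ _ _ _ _ _ (Separates.of_form hac h1 hp ha hc)
        (Separates.of_form hcb r1 hr (by tauto) hrb)

/-- For each factor `u` of the Thue-Morse word, there are at most two distinct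
subpermutations of `π_T` with form `u`. -/
theorem at_most_two_subperms_with_same_form (N a b c : ℕ) (hN : 2 ≤ N)
    (hab : SameForm N a b) (hac : SameForm N a c) (hbc : SameForm N b c) :
    SamePerm N a b ∨ SamePerm N a c ∨ SamePerm N b c := by
  obtain ⟨n, rfl⟩ : ∃ n, N = n + 1 := ⟨N - 1, by omega⟩
  by_contra hcon
  push Not at hcon
  obtain ⟨nab, nac, nbc⟩ := hcon
  obtain ⟨p, h1, hp, hne⟩ := exists_sep_of_not_samePerm hab.TM_eq nab
  by_cases ha : Prec (a + n) (a + n - p)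
  · exact no_three hab.TM_eq hac.TM_eq h1 hp ha (by tauto) nac nbc
  · exact no_three (fun i hi => (hab.TM_eq i hi).symm) hbc.TM_eq h1 hp (by tauto) ha nbc nac
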